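/- Let G be a finite group. The function ψ : G → ℕ defined by ψ(g) = |{(x,y) ∈ G × G : [x,y] = g}| satisfies ψ(g) = Σ_{χ ∈ Irr(G)} (|G|/χ(1)) χ(g) for all g ∈ G. -/

import Mathlib

open scoped BigOperators

/-- The commutator `[a,b] = a⁻¹b⁻¹ab`. -/
def gcomm {G : Type*} [Group G] (a b : G) : G := a⁻¹ * b⁻¹ * a * b

/-- Left-normed iterated commutator of a list of group elements. -/
def lcomm {G : Type*} [Group G] : List G → G
  | [] => 1
  | a :: t => t.foldl gcomm a

/-- `pgen H K n m g` is the probability that a randomly chosen left-normed commutator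
of weight `n + m` on `Hⁿ × Kᵐ` equals `g`. -/
noncomputable def pgen {G : Type*} [Group G] (H K : Subgroup G) (n m : ℕ) (g : G) : ℚ :=
  (Nat.card {z : (Fin n → H) × (Fin m → K) //
      lcomm (List.ofFn (fun i => ((z.1 i : G))) ++ List.ofFn (fun j => ((z.2 j : G)))) = g} : ℚ) /
    ((Nat.card H : ℚ) ^ n * (Nat.card K : ℚ) ^ m)

/-- The set of irreducible complex characters of `G`. -/
noncomputable def Irr (G : Type) [Group G] : Set (G → ℂ) :=
  {f | ∃ V : FDRep ℂ G, CategoryTheory.Simple V ∧ f = V.character}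


open CategoryTheory in
lemma aux_schur {G : Type} [Group G] [Fintype G] (V : FDRep ℂ G) (hV : Simple V)
    (T : V →ₗ[ℂ] V) (hT : ∀ g, V.ρ g ∘ₗ T = T ∘ₗ V.ρ g) :
    ∃ c : ℂ, T = c • LinearMap.id := by
  have h1 : Module.finrank ℂ (Representation.invariants (Representation.linHom V.ρ V.ρ)) = 1 := by
    rw [LinearEquiv.finrank_eq (Representation.linHom.invariantsEquivFDRepHom V V)]
    exact (FDRep.simple_iff_end_is_rank_one V).1 hV
  have key : ∀ S : V →ₗ[ℂ] V, (∀ g, V.ρ g ∘ₗ S = S ∘ₗ V.ρ g) →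
      S ∈ Representation.invariants (Representation.linHom V.ρ V.ρ) := by
    intro S hS g
    rw [Representation.linHom_apply, ← LinearMap.comp_assoc, hS, LinearMap.comp_assoc]
    have : V.ρ g ∘ₗ V.ρ g⁻¹ = LinearMap.id := by
      rw [← Module.End.mul_eq_comp, ← map_mul]; simp; rfl
    rw [this, LinearMap.comp_id]
  by_cases hid : (LinearMap.id : V →ₗ[ℂ] V) = 0
  · refine ⟨0, ?_⟩
    rw [zero_smul, ← LinearMap.comp_id T, hid, LinearMap.comp_zero]
  · have h2 := (finrank_eq_one_iff_of_nonzero'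
      (⟨LinearMap.id, key _ (fun g => rfl)⟩ :
        Representation.invariants (Representation.linHom V.ρ V.ρ))
      (fun h => hid (congrArg Subtype.val h))).1 h1 ⟨T, key T hT⟩
    obtain ⟨c, hc⟩ := h2
    exact ⟨c, (congrArg Subtype.val hc).symm⟩

lemma aux_finrank_ne {G : Type} [Group G] [Fintype G] (V : FDRep ℂ G)
    (hV : CategoryTheory.Simple V) : V.character 1 ≠ 0 := by
  intro h
  rw [FDRep.char_one, Nat.cast_eq_zero] at h
  have h0 : Subsingleton V := Module.finrank_zero_iff.1 h
  have h1 := (FDRep.simple_iff_char_is_norm_one V).1 hV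
  have h2 : ∀ g, V.character g = 0 := by
    intro g
    have : V.ρ g = 0 := by ext v; exact Subsingleton.elim _ _
    rw [FDRep.character, this, map_zero]
  simp only [h2, mul_zero, Finset.sum_const_zero] at h1
  exact (NeZero.ne (Nat.card G : ℂ)) h1.symm

lemma aux_central {G : Type} [Group G] [Fintype G] (V : FDRep ℂ G)
    (hV : CategoryTheory.Simple V) (f : G → ℂ) (hf : ∀ g h, f (h * g * h⁻¹) = f g) :
    ∑ g, f g • V.ρ g = ((∑ g, f g * V.character g) / V.character 1) • LinearMap.id := by
  obtain ⟨c, hc⟩ := aux_schur V hV (∑ g, f g • V.ρ g) (by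
    intro h
    rw [← Module.End.mul_eq_comp, ← Module.End.mul_eq_comp, Finset.mul_sum, Finset.sum_mul]
    refine Fintype.sum_equiv (MulAut.conj h).toEquiv _ _ (fun g => ?_)
    simp only [MulEquiv.toEquiv_eq_coe, MulEquiv.coe_toEquiv, MulAut.conj_apply, hf,
      mul_smul_comm, smul_mul_assoc, ← map_mul]
    simp)
  have ht := congrArg (LinearMap.trace ℂ V) hc
  simp only [map_sum, map_smul, smul_eq_mul] at ht
  have h1 : LinearMap.trace ℂ V LinearMap.id = V.character 1 := by
    rw [FDRep.character, map_one]; rfl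
  rw [h1] at ht
  have h3 : ∑ g, f g * V.character g = c * V.character 1 := ht
  rw [hc, h3, mul_div_cancel_right₀ _ (aux_finrank_ne V hV)]

lemma aux_simple {G : Type} [Group G] [Fintype G] (S : Type) [AddCommGroup S] [Module ℂ S]
    [Module (MonoidAlgebra ℂ G) S] [IsScalarTower ℂ (MonoidAlgebra ℂ G) S] [FiniteDimensional ℂ S]
    (hS : IsSimpleModule (MonoidAlgebra ℂ G) S) :
    CategoryTheory.Simple (FDRep.of (V := S) (Representation.ofModule' (k := ℂ) (G := G) S)) := by
  rw [FDRep.simple_iff_end_is_rank_one,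
    ← LinearEquiv.finrank_eq (Representation.linHom.invariantsEquivFDRepHom _ _)]
  have hnt : Nontrivial S := IsSimpleModule.nontrivial (MonoidAlgebra ℂ G) S
  set ρ : Representation ℂ G S := Representation.ofModule' (k := ℂ) (G := G) S with hρ
  have hρa : ∀ g (v : S), ρ g v = MonoidAlgebra.single g (1:ℂ) • v := by
    intro g v
    rfl
  change Module.finrank ℂ (Representation.invariants (Representation.linHom ρ ρ)) = 1
  have hid : (LinearMap.id : S →ₗ[ℂ] S) ∈ Representation.invariants (Representation.linHom ρ ρ) := by
    intro g
    ext v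
    simp [Representation.linHom_apply]
  refine (finrank_eq_one_iff_of_nonzero' (⟨LinearMap.id, hid⟩ :
    Representation.invariants (Representation.linHom ρ ρ)) ?_).2 ?_
  · intro h
    obtain ⟨v, hv⟩ := exists_ne (0 : S)
    exact hv (LinearMap.congr_fun (congrArg Subtype.val h) v)
  · rintro ⟨T, hT⟩
    have hT' : ∀ g v, T (ρ g v) = ρ g (T v) := by
      intro g v
      have h := LinearMap.congr_fun (hT g) (ρ g v)
      rw [Representation.linHom_apply] at h
      simpa using h.symm
    obtain ⟨c, hc⟩ := (IsSimpleModule.algebraMap_end_bijective_of_isAlgClosed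
      (A := MonoidAlgebra ℂ G) (V := S) ℂ).2
      (MonoidAlgebra.equivariantOfLinearOfComm T (fun g v => hT' g v))
    refine ⟨c, Subtype.ext (LinearMap.ext fun v => ?_)⟩
    exact LinearMap.congr_fun hc v

lemma aux_complete {G : Type} [Group G] [Fintype G] (f : G → ℂ)
    (hf : ∀ g h, f (h * g * h⁻¹) = f g)
    (h0 : ∀ χ ∈ Irr G, ∑ g, f g * χ g = 0) : f = 0 := by
  classical
  have : NeZero (Nat.card G : ℂ) := inferInstance
  set T : MonoidAlgebra ℂ G := ∑ g, MonoidAlgebra.single g (f g) with hTdef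
  have hT : ∀ x : MonoidAlgebra ℂ G, T * x = 0 := by
    have htop := IsSemisimpleModule.sSup_simples_eq_top (MonoidAlgebra ℂ G) (MonoidAlgebra ℂ G)
    intro x
    have hx : x ∈ sSup {m : Submodule (MonoidAlgebra ℂ G) (MonoidAlgebra ℂ G) |
      IsSimpleModule (MonoidAlgebra ℂ G) m} := by rw [htop]; trivial
    rw [sSup_eq_iSup'] at hx
    refine Submodule.iSup_induction _ (motive := fun x => T * x = 0) hx ?_ ?_ ?_
    · rintro ⟨S, hS⟩ v hv
      have hs := aux_simple S hS
      have hc := aux_central _ hs f hf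
      rw [h0 _ ⟨_, hs, rfl⟩, zero_div, zero_smul] at hc
      have h2 := congrArg Subtype.val (LinearMap.congr_fun hc (⟨v, hv⟩ : S))
      have h3 : ∀ g, (f g • (Representation.ofModule' (k := ℂ) (G := G) S) g) (⟨v, hv⟩ : S)
          = (⟨MonoidAlgebra.single g (f g) * v, S.smul_mem _ hv⟩ : S) := by
        intro g
        apply Subtype.ext
        change f g • (MonoidAlgebra.single g (1:ℂ) * v) = _
        rw [← smul_mul_assoc, MonoidAlgebra.smul_single, smul_eq_mul, mul_one]
      rw [FDRep.of_ρ', LinearMap.sum_apply, Finset.sum_congr rfl (fun g _ => h3 g)] at h2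
      rw [hTdef, Finset.sum_mul]
      simpa using h2
    · simp
    · intro a b ha hb
      rw [mul_add, ha, hb, add_zero]
  have h1 := hT 1
  rw [mul_one, hTdef] at h1
  funext g
  have h2 := congrArg (fun z : MonoidAlgebra ℂ G => z.coeff g) h1
  simpa [Finsupp.finsetSum_apply, Finsupp.single_apply] using h2

lemma aux_orth {G : Type} [Group G] [Fintype G] {χ φ : G → ℂ} (hχ : χ ∈ Irr G) (hφ : φ ∈ Irr G)
    [Decidable (χ = φ)] :
    ∑ g, χ g * φ g⁻¹ = if χ = φ then (Fintype.card G : ℂ) else 0 := by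
  obtain ⟨V, hV, rfl⟩ := hχ
  obtain ⟨W, hW, rfl⟩ := hφ
  have hne : (Nat.card G : ℂ) ≠ 0 := NeZero.ne _
  have := invertibleOfNonzero hne
  split_ifs with h
  · rw [← h, (FDRep.simple_iff_char_is_norm_one V).1 hV, Nat.card_eq_fintype_card]
  · have := FDRep.char_orthonormal V W
    rw [if_neg (fun ⟨i⟩ => h (FDRep.char_iso i))] at this
    simpa [hne] using this

lemma aux_finite (G : Type) [Group G] [Fintype G] : (Irr G).Finite := by
  classical
  have : LinearIndependent ℂ (fun χ : Irr G => (χ : G → ℂ)) := by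
    rw [linearIndependent_iff']
    intro s c hs χ hχ
    have h1 : ∑ g, (∑ φ ∈ s, c φ • (φ : G → ℂ)) g * (χ : G → ℂ) g⁻¹ = 0 := by
      rw [hs]; simp
    simp only [Finset.sum_apply, Pi.smul_apply, smul_eq_mul, Finset.sum_mul] at h1
    rw [Finset.sum_comm] at h1
    simp only [mul_assoc, ← Finset.mul_sum, aux_orth (Subtype.prop _) χ.2, Subtype.coe_inj] at h1
    simpa [hχ] using h1
  have := this.finite
  exact Set.toFinite _

lemma aux_comm {G : Type} [Group G] [Fintype G] {χ : G → ℂ} (hχ : χ ∈ Irr G) :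
    ∑ x, ∑ y, χ (gcomm x y)⁻¹ = (Fintype.card G : ℂ) ^ 2 / χ 1 := by
  classical
  have ho := aux_orth hχ hχ
  obtain ⟨V, hV, rfl⟩ := hχ
  -- sum over conjugates
  have hconj : ∀ x z : G, ∑ y, V.character (y⁻¹ * x * y * z)
      = (Fintype.card G : ℂ) / V.character 1 * V.character x * V.character z := by
    intro x z
    obtain ⟨c, hc⟩ := aux_schur V hV (∑ y, V.ρ (y⁻¹ * x * y)) (by
      intro h
      rw [← Module.End.mul_eq_comp, ← Module.End.mul_eq_comp, Finset.mul_sum, Finset.sum_mul]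
      refine Fintype.sum_equiv (Equiv.mulRight h⁻¹) _ _ (fun g => ?_)
      rw [← map_mul, ← map_mul]
      simp [mul_assoc])
    have hz : ∑ y, V.character (y⁻¹ * x * y * z) = c * V.character z := by
      have := congrArg (fun A => LinearMap.trace ℂ V (A * V.ρ z)) hc
      simp only [Finset.sum_mul, ← map_mul, map_sum] at this
      have h2 : (c • LinearMap.id : V →ₗ[ℂ] V) * V.ρ z = c • V.ρ z := by
        rw [smul_mul_assoc]; rfl
      rw [h2, map_smul] at this
      exact this
    have hc' : (Fintype.card G : ℂ) * V.character x = c * V.character 1 := by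
      have := congrArg (LinearMap.trace ℂ V) hc
      rw [map_sum, map_smul] at this
      have h1 : LinearMap.trace ℂ V LinearMap.id = V.character 1 := by
        rw [FDRep.character, map_one]; rfl
      have h2 : ∀ y, LinearMap.trace ℂ V (V.ρ (y⁻¹ * x * y)) = V.character x := by
        intro y
        have := V.char_conj x y⁻¹
        rwa [inv_inv] at this
      rw [h1, Finset.sum_congr rfl (fun y _ => h2 y), Finset.sum_const, Finset.card_univ,
        nsmul_eq_mul] at this
      exact this
    have hne := aux_finrank_ne V hV
    rw [hz]
    field_simp
    linear_combination (-V.character z) * hc'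
  have h1 : ∀ x y : G, (gcomm x y)⁻¹ = y⁻¹ * x⁻¹ * y * x := by
    intro x y; simp [gcomm, mul_assoc]
  simp only [h1, hconj]
  rw [if_pos rfl] at ho
  calc _ = (Fintype.card G : ℂ) / V.character 1 * ∑ x, V.character x * V.character x⁻¹ := by
        rw [Finset.mul_sum]; exact Finset.sum_congr rfl fun x _ => by ring
    _ = _ := by rw [ho]; ring

lemma aux_conj {G : Type} [Group G] {χ : G → ℂ} (hχ : χ ∈ Irr G) (g h : G) :
    χ (h * g * h⁻¹) = χ g := by
  obtain ⟨V, hV, rfl⟩ := hχ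
  exact V.char_conj g h

lemma aux_card {G : Type} [Group G] [Fintype G] [DecidableEq G] (g : G) :
    (Nat.card {p : G × G // gcomm p.1 p.2 = g} : ℂ) =
      ∑ x : G, ∑ y : G, if gcomm x y = g then (1:ℂ) else 0 := by
  rw [Nat.card_eq_fintype_card, Fintype.card_subtype, ← Fintype.sum_prod_type']
  simp

theorem stmt1 (G : Type) [Group G] [Fintype G] (g : G) :
    (Nat.card {p : G × G // gcomm p.1 p.2 = g} : ℂ) =
      ∑ᶠ χ ∈ Irr G, ((Fintype.card G : ℂ) / χ 1) * χ g := by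
  classical
  rw [finsum_mem_eq_finite_toFinset_sum _ (aux_finite G)]
  set s := (aux_finite G).toFinset with hs
  have hmem : ∀ χ ∈ s, χ ∈ Irr G := fun χ h => (aux_finite G).mem_toFinset.1 h
  have key := aux_complete (G := G) (fun g => (Nat.card {p : G × G // gcomm p.1 p.2 = g⁻¹} : ℂ) -
    ∑ χ ∈ s, ((Fintype.card G : ℂ) / χ 1) * χ g⁻¹) ?_ ?_
  · have := congrFun key g⁻¹
    simpa [sub_eq_zero] using this
  · intro a h
    have hinv : (h * a * h⁻¹)⁻¹ = h * a⁻¹ * h⁻¹ := by simp [mul_assoc]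
    simp only [hinv]
    congr 1
    · congr 1
      refine Nat.card_congr (Equiv.subtypeEquiv
        (Equiv.prodCongr (MulAut.conj h⁻¹).toEquiv (MulAut.conj h⁻¹).toEquiv) ?_)
      rintro ⟨x, y⟩
      have : gcomm (h⁻¹ * x * h) (h⁻¹ * y * h) = h⁻¹ * gcomm x y * h := by
        simp [gcomm, mul_assoc]
      simp only [Equiv.prodCongr_apply, Prod.map, MulEquiv.toEquiv_eq_coe, MulEquiv.coe_toEquiv,
        MulAut.conj_apply, inv_inv, this]
      constructor
      · intro e; rw [e]; group
      · intro e; rw [← e]; group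
    · exact Finset.sum_congr rfl fun χ hχ => by rw [aux_conj (hmem χ hχ)]
  · intro φ hφ
    simp only [sub_mul, Finset.sum_sub_distrib]
    rw [sub_eq_zero]
    trans (Fintype.card G : ℂ) ^ 2 / φ 1
    · rw [← aux_comm hφ]
      simp only [aux_card, Finset.sum_mul]
      rw [Finset.sum_comm]
      refine Finset.sum_congr rfl fun x _ => ?_
      rw [Finset.sum_comm]
      refine Finset.sum_congr rfl fun y _ => ?_
      rw [Finset.sum_eq_single (gcomm x y)⁻¹]
      · simp
      · intro b _ hb
        rw [if_neg, zero_mul]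
        intro e; exact hb (by rw [e, inv_inv])
      · simp
    · simp only [Finset.sum_mul]
      rw [Finset.sum_comm]
      have : ∀ χ ∈ s, ∑ x, (Fintype.card G : ℂ) / χ 1 * χ x⁻¹ * φ x =
          if φ = χ then (Fintype.card G : ℂ) ^ 2 / φ 1 else 0 := by
        intro χ hχ
        have h1 := aux_orth hφ (hmem χ hχ)
        calc _ = (Fintype.card G : ℂ) / χ 1 * ∑ x, φ x * χ x⁻¹ := by
              rw [Finset.mul_sum]; exact Finset.sum_congr rfl fun x _ => by ring
          _ = _ := by
              rw [h1]
              split_ifs with h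
              · rw [h]; ring
              · ring
      rw [Finset.sum_congr rfl this, Finset.sum_ite_eq, if_pos]
      exact (aux_finite G).mem_toFinset.2 hφ
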